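/- arXiv:2510.01401 — 2 statements merged into one kernel-verified Lean document; each statement's English description precedes it below -/
import Mathlib

section
/- Let a, b, c be positive reals and define, for xi > a, G(xi) = c*( (1/3)*(xi - a)^3 + ((2a - bc)/2)*(xi - a)^2 - 2*a*b*c*(xi - a) - 2*a^3*log(xi - a) + (a^4 - 2*a^3*b*c)/(xi - a) - a^4*b*c/(2*(xi - a)^2) ). Then G is differentiable on (a, infinity) and G'(xi) = c*(bc + a - xi)*(2a - xi)*xi^3/(xi - a)^3 for all xi > a. -/
/-- Let `a, b, c` be positive reals and define, for `ξ > a`,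
`G(ξ) = c*( (1/3)(ξ-a)³ + ((2a-bc)/2)(ξ-a)² - 2abc(ξ-a) - 2a³ log(ξ-a)`
`        + (a⁴ - 2a³bc)/(ξ-a) - a⁴bc/(2(ξ-a)²) )`.
Then `G` is differentiable on `(a, ∞)` with
`G'(ξ) = c*(bc + a - ξ)*(2a - ξ)*ξ³/(ξ - a)³` for all `ξ > a`. -/
theorem stmt_7 (a b c : ℝ) (ha : 0 < a) (hb : 0 < b) (hc : 0 < c) :
    ∀ ξ : ℝ, a < ξ →
      HasDerivAt (fun ξ : ℝ => c *
          ((1 / 3) * (ξ - a) ^ 3 + (2 * a - b * c) / 2 * (ξ - a) ^ 2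
            - 2 * a * b * c * (ξ - a) - 2 * a ^ 3 * Real.log (ξ - a)
            + (a ^ 4 - 2 * a ^ 3 * b * c) / (ξ - a)
            - a ^ 4 * b * c / (2 * (ξ - a) ^ 2)))
        (c * (b * c + a - ξ) * (2 * a - ξ) * ξ ^ 3 / (ξ - a) ^ 3) ξ := by
  intro ξ hξ
  have ht : ξ - a ≠ 0 := (sub_pos.mpr hξ).ne'
  have ht2 : 2 * (ξ - a) ^ 2 ≠ 0 := mul_ne_zero two_ne_zero (pow_ne_zero 2 ht)
  have h1 : HasDerivAt (fun x : ℝ => x - a) 1 ξ := (hasDerivAt_id ξ).sub_const a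
  have key := (((((((h1.pow 3).const_mul (1 / 3)).add
    ((h1.pow 2).const_mul ((2 * a - b * c) / 2))).sub
    (h1.const_mul (2 * a * b * c))).sub
    ((h1.log ht).const_mul (2 * a ^ 3))).add
    ((hasDerivAt_const ξ (a ^ 4 - 2 * a ^ 3 * b * c)).div h1 ht)).sub
    ((hasDerivAt_const ξ (a ^ 4 * b * c)).div ((h1.pow 2).const_mul 2) ht2)).const_mul c
  refine key.congr_deriv ?_
  simp only [Pi.pow_apply]
  -- In terms of `t = ξ - a` the only denominators are powers of `t`.
  obtain ⟨t, rfl⟩ : ∃ t, ξ = t + a := ⟨ξ - a, by ring⟩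
  simp only [add_sub_cancel_right] at ht ⊢
  field_simp
  push_cast
  ring
end

section
/- Let tau > 0 and c > 0. Then there exists a unique real lambda_0 > 0 satisfying 4 + 3*tau*lambda_0/(c + tau*lambda_0) - 2*lambda_0 - sqrt(1 + lambda_0) = 0, equivalently sqrt(1 + lambda_0) = 4 - 2*lambda_0 + 3*tau*lambda_0/(c + tau*lambda_0). -/
/-!
Write `f x = 4 + 3τx/(c + τx) - 2x - √(1 + x)`. Existence: `f 0 = 3` and `f 4 < 0`, since the
fraction is below `3`. The function `f` need not be monotone or concave, so uniqueness goes through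
`f x / x`, which is strictly decreasing where the roots lie. In cross-multiplied form: for
`0 < a < b` with `√(1 + b) < 4`, put `s = √(1 + a)` and `t = √(1 + b)`. In `b f(a) - a f(b)` the
linear terms cancel, the fractions contribute a nonnegative amount, and the rest is
`4 (b - a) - (b s - a t) = (t - s) (4 (s + t) - (s t + 1)) > 0`. Every root is less than `4`
because the fraction is below `3`, so two distinct roots are impossible.
-/

lemma frac_lt_three {τ c x : ℝ} (hτ : 0 < τ) (hc : 0 < c) (hx : 0 < x) :
    3 * τ * x / (c + τ * x) < 3 := by
  have h : 0 < τ * x := mul_pos hτ hx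
  rw [div_lt_iff₀ (by linarith)]
  nlinarith

/-- There are no two roots `a < b`: the combination `b f(a) - a f(b)` is positive. -/
lemma no_two_roots {τ c a b : ℝ} (hτ : 0 < τ) (hc : 0 < c) (ha : 0 < a) (hab : a < b)
    (hfa : 4 + 3 * τ * a / (c + τ * a) - 2 * a - Real.sqrt (1 + a) = 0)
    (hfb : 4 + 3 * τ * b / (c + τ * b) - 2 * b - Real.sqrt (1 + b) = 0) : False := by
  have hb : 0 < b := ha.trans hab
  have hb3 := frac_lt_three hτ hc hb
  have hst : Real.sqrt (1 + a) < Real.sqrt (1 + b) :=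
    Real.sqrt_lt_sqrt (by linarith) (by linarith)
  have hs := Real.sq_sqrt (show 0 ≤ 1 + a by linarith)
  have ht := Real.sq_sqrt (show 0 ≤ 1 + b by linarith)
  have hs0 : 0 < Real.sqrt (1 + a) := Real.sqrt_pos.2 (by linarith)
  have hfrac : a * (3 * τ * b / (c + τ * b)) ≤ b * (3 * τ * a / (c + τ * a)) := by
    have h1 : 0 < c + τ * a := by positivity
    have h2 : c + τ * a ≤ c + τ * b := by nlinarith
    have h3 : 3 * τ * a * b / (c + τ * b) ≤ 3 * τ * a * b / (c + τ * a) := by gcongr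
    calc a * (3 * τ * b / (c + τ * b)) = 3 * τ * a * b / (c + τ * b) := by ring
      _ ≤ 3 * τ * a * b / (c + τ * a) := h3
      _ = b * (3 * τ * a / (c + τ * a)) := by ring
  generalize Real.sqrt (1 + a) = s at *
  generalize Real.sqrt (1 + b) = t at *
  generalize 3 * τ * a / (c + τ * a) = u at *
  generalize 3 * τ * b / (c + τ * b) = v at *
  have ht4 : t < 4 := by nlinarith
  have ht1 : 1 < t := by nlinarith
  have hpos : 0 < (t - s) * (4 * (s + t) - (s * t + 1)) := by
    apply mul_pos (by linarith)
    nlinarith [mul_pos hs0 (sub_pos.2 ht4)]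
  obtain rfl : a = s ^ 2 - 1 := by linarith
  obtain rfl : b = t ^ 2 - 1 := by linarith
  -- `(t² - 1) f(a) - (s² - 1) f(b) = 0`, while it is at least the positive product above.
  nlinarith [congrArg ((t ^ 2 - 1) * ·) hfa, congrArg ((s ^ 2 - 1) * ·) hfb]

/-- Let `τ > 0` and `c > 0`. Then there exists a unique real `λ₀ > 0` satisfying
`4 + 3τλ₀/(c + τλ₀) - 2λ₀ - √(1 + λ₀) = 0`, equivalently
`√(1 + λ₀) = 4 - 2λ₀ + 3τλ₀/(c + τλ₀)`. -/
theorem stmt_14 (τ c : ℝ) (hτ : 0 < τ) (hc : 0 < c) :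
    ∃! lam : ℝ, 0 < lam ∧
      4 + 3 * τ * lam / (c + τ * lam) - 2 * lam - Real.sqrt (1 + lam) = 0 := by
  have hcont : ContinuousOn
      (fun x : ℝ => 4 + 3 * τ * x / (c + τ * x) - 2 * x - Real.sqrt (1 + x)) (Set.Icc 0 4) := by
    have hne : ∀ x ∈ Set.Icc (0 : ℝ) 4, c + τ * x ≠ 0 := fun x hx => by
      have := mul_nonneg hτ.le hx.1
      linarith
    have hdiv : ContinuousOn (fun x : ℝ => 3 * τ * x / (c + τ * x)) (Set.Icc 0 4) :=
      ContinuousOn.div (by fun_prop) (by fun_prop) hne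
    fun_prop
  have h4 := frac_lt_three hτ hc (show (0 : ℝ) < 4 by norm_num)
  have hneg : 4 + 3 * τ * 4 / (c + τ * 4) - 2 * 4 - Real.sqrt (1 + 4) ≤ 0 := by
    have h5 : 0 ≤ Real.sqrt (1 + 4) := Real.sqrt_nonneg _
    generalize Real.sqrt (1 + 4) = r at *
    generalize 3 * τ * 4 / (c + τ * 4) = u at *
    linarith
  have hpos : 0 ≤ 4 + 3 * τ * 0 / (c + τ * 0) - 2 * 0 - Real.sqrt (1 + 0) := by
    norm_num
  have hmem := intermediate_value_Icc' (by norm_num) hcont ⟨hneg, hpos⟩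
  obtain ⟨x, hx, hfx⟩ := hmem
  have hx0 : 0 < x := by
    rcases hx.1.eq_or_lt with h | h
    · subst h
      norm_num at hfx
    · exact h
  refine ⟨x, ⟨hx0, hfx⟩, ?_⟩
  rintro y ⟨hy0, hfy⟩
  rcases lt_trichotomy y x with h | h | h
  · exact (no_two_roots hτ hc hy0 h hfy hfx).elim
  · exact h
  · exact (no_two_roots hτ hc hx0 h hfx hfy).elim
end
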